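/- Suppose f : [−1,1] → [−1,1] can, for every m, be uniformly approximated up to error 2^{-m} by a real polynomial P_m of degree ≤ D_m. Then f has binary modulus of continuity μ_f(n) ≤ n + 2 + 2⌈log₂ D_{n+2}⌉: |x − x'| ≤ 2^{-(n+2+2⌈log₂ D_{n+2}⌉)} implies |f(x) − f(x')| ≤ 2^{-n}. -/

import Mathlib

/-!
Let `t` be a trigonometric polynomial of degree at most `n`. M. Riesz's interpolation formula writes
`t'(θ)` as a combination of the `2n` translates `t (θ + arg ω)`, `ω ^ (2n) = -1`, with coefficients
of total mass `n`; hence `‖t'‖ ≤ n sup ‖t‖` (Bernstein). For a polynomial `P` of degree at most `n`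
bounded by `M` on `[-1, 1]`, taking `t θ = P (cos θ)` gives `‖P' x‖ √(1 - x²) ≤ n M`. The weight is
removed by Schur's inequality, which is Bernstein's estimate at `θ = 0` for `sin θ * Q (cos θ)`,
`Q = P'`, followed by a rescaling of the variable. The result is Markov's inequality
`‖P'‖ ≤ n² M`, so `P` is Lipschitz with constant `n² M`. An approximant of `f` within `1/4 * 2⁻ⁿ` is
bounded by `2`, so it varies by at most `2 / 4 * 2⁻ⁿ` at the given distance, and the two
approximation errors account for the other half of `2⁻ⁿ`.
-/

open Finset Polynomial

namespace MarkovInequality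

section Domain

variable {R : Type*} [CommRing R] [IsDomain R] {N : ℕ} {η : R}

lemma pow_eq_of_mem_nthRootsFinset {a ω : R} (hω : ω ∈ nthRootsFinset N a) : ω ^ N = a := by
  rcases N.eq_zero_or_pos with rfl | hN
  · simp at hω
  · exact (mem_nthRootsFinset hN a).mp hω

lemma sum_nthRootsFinset_pow_eq_zero {ζ : R} (hζ : IsPrimitiveRoot ζ N) (a : R) {j : ℕ}
    (hj : 0 < j) (hjN : j < N) :
    ∑ ω ∈ nthRootsFinset N a, ω ^ j = 0 := by
  have hN : 0 < N := hj.trans hjN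
  have hrotate : ∑ ω ∈ nthRootsFinset N a, (ζ * ω) ^ j = ∑ ω ∈ nthRootsFinset N a, ω ^ j :=
    sum_equiv (Units.mulLeft (hζ.isUnit hN.ne').unit)
      (by simp [mem_nthRootsFinset hN, mul_pow, hζ.pow_eq_one]) (by simp)
  simp_rw [mul_pow, ← mul_sum] at hrotate
  exact (mul_left_eq_self₀.mp hrotate).resolve_left (hζ.pow_ne_one_of_pos_of_lt hj.ne' hjN)

lemma pow_half_eq_neg_one (hη : IsPrimitiveRoot η (2 * N)) (hN : 0 < N) : η ^ N = -1 :=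
  (hη.pow (by omega) (mul_comm 2 N)).eq_neg_one_of_two_right

lemma card_nthRootsFinset_neg_one (hη : IsPrimitiveRoot η (2 * N)) :
    #(nthRootsFinset N (-1 : R)) = N := by
  classical
  rcases N.eq_zero_or_pos with rfl | hN
  · simp
  have hζ : IsPrimitiveRoot (η ^ 2) N := hη.pow (by omega) rfl
  rw [nthRootsFinset_def, Multiset.toFinset_card_of_nodup (hζ.nthRoots_nodup (by simp)),
    hζ.card_nthRoots, if_pos ⟨η, pow_half_eq_neg_one hη hN⟩]

lemma ne_one_of_mem_nthRootsFinset_neg_one (hη : IsPrimitiveRoot η (2 * N)) {ω : R}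
    (hω : ω ∈ nthRootsFinset N (-1 : R)) : ω ≠ 1 := by
  rcases N.eq_zero_or_pos with rfl | hN
  · simp at hω
  rintro rfl
  refine hη.pow_ne_one_of_pos_of_lt hN.ne' (by omega) ?_
  rw [pow_half_eq_neg_one hη hN, ← pow_eq_of_mem_nthRootsFinset hω, one_pow]

end Domain

section Field

variable {K : Type*} [Field K] {N : ℕ} {η : K}

lemma ne_zero_of_mem_nthRootsFinset_neg_one {ω : K} (hω : ω ∈ nthRootsFinset N (-1 : K)) :
    ω ≠ 0 :=
  ne_zero_of_mem_nthRootsFinset (neg_ne_zero.mpr one_ne_zero) hω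

lemma sum_nthRootsFinset_neg_one_inv {A : Type*} [AddCommMonoid A] (N : ℕ) (g : K → A) :
    ∑ ω ∈ nthRootsFinset N (-1 : K), g ω⁻¹ = ∑ ω ∈ nthRootsFinset N (-1 : K), g ω := by
  rcases N.eq_zero_or_pos with rfl | hN
  · simp
  refine sum_equiv (Equiv.inv K) (fun ω => ?_) fun ω _ => rfl
  simp [mem_nthRootsFinset hN, inv_eq_iff_eq_inv]

lemma two_mul_sum_pow_div_sub_one (hη : IsPrimitiveRoot η (2 * N)) {j : ℕ} (hj : j < N) :
    2 * ∑ ω ∈ nthRootsFinset N (-1 : K), ω ^ (j + 1) / (ω - 1) = N := by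
  induction j with
  | zero =>
    have hpair : ∀ ω ∈ nthRootsFinset N (-1 : K), ω / (ω - 1) + ω⁻¹ / (ω⁻¹ - 1) = 1 := by
      intro ω hω
      have hω₀ := ne_zero_of_mem_nthRootsFinset_neg_one hω
      have hω₁ := ne_one_of_mem_nthRootsFinset_neg_one hη hω
      have h_sub_one := sub_ne_zero.mpr hω₁
      have h_one_sub := sub_ne_zero.mpr hω₁.symm
      field_simp
      ring
    have hsum := sum_congr rfl hpair
    rw [sum_add_distrib, sum_nthRootsFinset_neg_one_inv N fun ω : K => ω / (ω - 1), sum_const,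
      card_nthRootsFinset_neg_one hη, nsmul_one] at hsum
    simpa [two_mul] using hsum
  | succ j ih =>
    have hdiff : ∑ ω ∈ nthRootsFinset N (-1 : K),
        (ω ^ (j + 1 + 1) / (ω - 1) - ω ^ (j + 1) / (ω - 1)) = 0 := by
      rw [← sum_nthRootsFinset_pow_eq_zero (hη.pow (by omega) rfl) (-1) j.succ_pos hj]
      refine sum_congr rfl fun ω hω => ?_
      have h_sub_one := sub_ne_zero.mpr (ne_one_of_mem_nthRootsFinset_neg_one hη hω)
      field_simp
      ring
    rw [sum_sub_distrib, sub_eq_zero] at hdiff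
    rw [hdiff, ih (by omega)]

-- The second difference in `j` is a vanishing power sum, so the left side is affine in `j`; the
-- symmetry `ω ↦ ω⁻¹` exchanges `j` with `N - j` up to sign and determines the constant term.
lemma four_mul_sum_pow_div_sub_one_sq (hη : IsPrimitiveRoot η (2 * N)) {j : ℕ} (hj : j ≤ N) :
    4 * ∑ ω ∈ nthRootsFinset N (-1 : K), ω ^ (j + 1) / (ω - 1) ^ 2 = (N : K) * (2 * j - N) := by
  set S : ℕ → K := fun i => ∑ ω ∈ nthRootsFinset N (-1 : K), ω ^ (i + 1) / (ω - 1) ^ 2 with hS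
  have hstep : ∀ i < N, 2 * S (i + 1) = 2 * S i + N := fun i hi => by
    rw [← two_mul_sum_pow_div_sub_one hη hi, ← mul_add, ← sum_add_distrib]
    refine congrArg (fun s : K => 2 * s) (sum_congr rfl fun ω hω => ?_)
    have h_sub_one := sub_ne_zero.mpr (ne_one_of_mem_nthRootsFinset_neg_one hη hω)
    field_simp
    ring
  have haffine : ∀ i ≤ N, 2 * S i = 2 * S 0 + i * N := fun i => by
    induction i with
    | zero => simp
    | succ i ih =>
      intro hi
      rw [hstep i hi, ih (by omega)]
      push_cast
      ring
  have hreflect : S N = -S 0 := by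
    simp only [hS, ← sum_neg_distrib]
    rw [← sum_nthRootsFinset_neg_one_inv N fun ω : K => ω ^ (N + 1) / (ω - 1) ^ 2]
    refine sum_congr rfl fun ω hω => ?_
    have hω₀ := ne_zero_of_mem_nthRootsFinset_neg_one hω
    have hω₁ := ne_one_of_mem_nthRootsFinset_neg_one hη hω
    have h_sub_one := sub_ne_zero.mpr hω₁
    have h_one_sub := sub_ne_zero.mpr hω₁.symm
    rw [inv_pow, pow_succ, pow_eq_of_mem_nthRootsFinset hω]
    field_simp
    ring
  have hN := haffine N le_rfl
  rw [hreflect] at hN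
  linear_combination (2 : K) * haffine j hj - hN

end Field

section TrigPolynomial

/-- The trigonometric polynomials of degree at most `n`, as complex-valued functions of a real
variable: linear combinations of the exponentials of integer frequency `j` with `|j| ≤ n`. -/
noncomputable def trigPolynomialLE (n : ℕ) : Submodule ℂ (ℝ → ℂ) :=
  Submodule.span ℂ ((fun (j : ℤ) (θ : ℝ) => Complex.exp (j * (θ * Complex.I))) ''
    {j : ℤ | |j| ≤ n})

/-- The weight of the translate by `arg ω`, where `ω ^ (2 * n) = -1`, in M. Riesz's interpolation
formula for the derivative of a trigonometric polynomial of degree at most `n`. -/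
noncomputable def rieszWeight (n : ℕ) (ω : ℂ) : ℂ :=
  Complex.I / n * (ω ^ (n + 1) / (ω - 1) ^ 2)

lemma norm_eq_one_of_mem_nthRootsFinset_neg_one {N : ℕ} {ω : ℂ}
    (hω : ω ∈ nthRootsFinset N (-1 : ℂ)) : ‖ω‖ = 1 := by
  have hpow := pow_eq_of_mem_nthRootsFinset hω
  rcases N.eq_zero_or_pos with rfl | hN
  · simp at hω
  exact Complex.norm_eq_one_of_pow_eq_one (n := N * 2) (by rw [pow_mul, hpow, neg_one_sq])
    (by omega)

lemma div_sub_one_sq_of_norm_eq_one {ω : ℂ} (hω : ‖ω‖ = 1) :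
    ω / (ω - 1) ^ 2 = -((1 / ‖ω - 1‖ ^ 2 : ℝ) : ℂ) := by
  have hω₀ : ω ≠ 0 := norm_ne_zero_iff.mp (by simp [hω])
  have hsq : (‖ω - 1‖ ^ 2 : ℂ) = -((ω - 1) ^ 2 / ω) := by
    rw [← Complex.mul_conj', map_sub, map_one, ← Complex.inv_eq_conj hω]
    field_simp
    ring
  push_cast
  rw [hsq, one_div, inv_neg, neg_neg, inv_div]

lemma sum_norm_rieszWeight (n : ℕ) :
    ∑ ω ∈ nthRootsFinset (2 * n) (-1 : ℂ), ‖rieszWeight n ω‖ = n := by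
  rcases eq_or_ne n 0 with rfl | hn
  · simp
  have hn' : (n : ℝ) ≠ 0 := Nat.cast_ne_zero.mpr hn
  have hsum : ∑ ω ∈ nthRootsFinset (2 * n) (-1 : ℂ), 1 / ‖ω - 1‖ ^ 2 = (n : ℝ) ^ 2 := by
    have hη := Complex.isPrimitiveRoot_exp (2 * (2 * n)) (by omega)
    have h := four_mul_sum_pow_div_sub_one_sq hη (Nat.zero_le _)
    simp only [zero_add, pow_one] at h
    rw [sum_congr rfl fun ω hω => div_sub_one_sq_of_norm_eq_one
      (norm_eq_one_of_mem_nthRootsFinset_neg_one hω), sum_neg_distrib] at h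
    apply Complex.ofReal_injective
    push_cast at h ⊢
    linear_combination -h / 4
  calc ∑ ω ∈ nthRootsFinset (2 * n) (-1 : ℂ), ‖rieszWeight n ω‖
      = ∑ ω ∈ nthRootsFinset (2 * n) (-1 : ℂ), 1 / n * (1 / ‖ω - 1‖ ^ 2) :=
        sum_congr rfl fun ω hω => by
          simp [rieszWeight, norm_eq_one_of_mem_nthRootsFinset_neg_one hω]
    _ = n := by rw [← mul_sum, hsum]; field_simp

lemma sum_rieszWeight_mul_zpow {n : ℕ} {j : ℤ} (hj : |j| ≤ n) :
    ∑ ω ∈ nthRootsFinset (2 * n) (-1 : ℂ), rieszWeight n ω * ω ^ j = j * Complex.I := by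
  rcases eq_or_ne n 0 with rfl | hn
  · have : j = 0 := by simpa using hj
    simp [this]
  obtain ⟨hj₁, hj₂⟩ := abs_le.mp hj
  obtain ⟨i, hi⟩ := Int.eq_ofNat_of_zero_le (show 0 ≤ j + n by omega)
  have hη := Complex.isPrimitiveRoot_exp (2 * (2 * n)) (by omega)
  have hsum := four_mul_sum_pow_div_sub_one_sq hη (show i ≤ 2 * n by omega)
  have hshift : ∀ ω ∈ nthRootsFinset (2 * n) (-1 : ℂ),
      rieszWeight n ω * ω ^ j = Complex.I / n * (ω ^ (i + 1) / (ω - 1) ^ 2) := fun ω hω => by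
    have hω₀ := ne_zero_of_mem_nthRootsFinset_neg_one hω
    have hpow : ω ^ (n + 1) * ω ^ j = ω ^ (i + 1) := by
      rw [← zpow_natCast, ← zpow_natCast, ← zpow_add₀ hω₀]
      congr 1
      omega
    rw [rieszWeight, ← hpow]
    ring
  have hji : (j : ℂ) = i - n := by exact_mod_cast eq_sub_of_add_eq hi
  have hn' : (n : ℂ) ≠ 0 := Nat.cast_ne_zero.mpr hn
  rw [sum_congr rfl hshift, ← mul_sum, hji]
  field_simp
  push_cast at hsum
  linear_combination 1 / 4 * hsum

theorem hasDerivAt_of_mem_trigPolynomialLE {n : ℕ} {t : ℝ → ℂ} (ht : t ∈ trigPolynomialLE n)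
    (θ : ℝ) : HasDerivAt t
      (∑ ω ∈ nthRootsFinset (2 * n) (-1 : ℂ), rieszWeight n ω * t (θ + ω.arg)) θ := by
  induction ht using Submodule.span_induction with
  | mem t ht =>
    obtain ⟨j, hj, rfl⟩ := ht
    have hexp : HasDerivAt (fun φ : ℝ => Complex.exp (j * (φ * Complex.I)))
        (Complex.exp (j * (θ * Complex.I)) * (j * Complex.I)) θ := by
      simpa using ((((hasDerivAt_id θ).ofReal_comp.mul_const Complex.I).const_mul (j : ℂ)).cexp)
    convert hexp using 1
    rw [← sum_rieszWeight_mul_zpow hj, mul_sum]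
    refine sum_congr rfl fun ω hω => ?_
    have harg : Complex.exp (ω.arg * Complex.I) = ω := by
      simpa [norm_eq_one_of_mem_nthRootsFinset_neg_one hω] using Complex.norm_mul_exp_arg_mul_I ω
    beta_reduce
    rw [Complex.ofReal_add, add_mul, mul_add, Complex.exp_add, Complex.exp_int_mul _ j,
      Complex.exp_int_mul _ j, harg]
    ring
  | zero => simp
  | add s t _ _ hs ht => simpa only [Pi.add_apply, mul_add, sum_add_distrib] using hs.add ht
  | smul c t _ ht =>
    simpa only [Pi.smul_apply, smul_eq_mul, mul_sum, mul_left_comm] using ht.const_smul c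

theorem norm_deriv_le_of_mem_trigPolynomialLE {n : ℕ} {t : ℝ → ℂ} (ht : t ∈ trigPolynomialLE n)
    {M : ℝ} (hM : ∀ θ, ‖t θ‖ ≤ M) (θ : ℝ) : ‖deriv t θ‖ ≤ n * M := by
  rw [(hasDerivAt_of_mem_trigPolynomialLE ht θ).deriv, ← sum_norm_rieszWeight n, sum_mul]
  refine norm_sum_le_of_le _ fun ω _ => ?_
  rw [norm_mul]
  gcongr
  exact hM _

lemma trigPolynomialLE_mono : Monotone trigPolynomialLE := fun m n hmn =>
  Submodule.span_mono (Set.image_mono fun j (hj : |j| ≤ m) => hj.trans (by exact_mod_cast hmn))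

lemma one_mem_trigPolynomialLE (n : ℕ) : 1 ∈ trigPolynomialLE n :=
  Submodule.subset_span ⟨0, by simp, by ext; simp⟩

lemma mul_mem_trigPolynomialLE {m n : ℕ} {s t : ℝ → ℂ} (hs : s ∈ trigPolynomialLE m)
    (ht : t ∈ trigPolynomialLE n) : s * t ∈ trigPolynomialLE (m + n) := by
  have hst := Submodule.mul_mem_mul hs ht
  rw [trigPolynomialLE, trigPolynomialLE, Submodule.span_mul_span] at hst
  refine Submodule.span_mono ?_ hst
  rintro _ ⟨_, ⟨i, hi, rfl⟩, _, ⟨j, hj, rfl⟩, rfl⟩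
  refine ⟨i + j, ?_, ?_⟩
  · push_cast
    exact (abs_add_le i j).trans (add_le_add hi hj)
  · ext θ
    simp [add_mul, Complex.exp_add]

lemma pow_mem_trigPolynomialLE {m : ℕ} {t : ℝ → ℂ} (ht : t ∈ trigPolynomialLE m) (k : ℕ) :
    t ^ k ∈ trigPolynomialLE (k * m) := by
  induction k with
  | zero => simpa using one_mem_trigPolynomialLE 0
  | succ k ih => simpa only [pow_succ, Nat.succ_mul] using mul_mem_trigPolynomialLE ih ht

lemma eval_comp_mem_trigPolynomialLE {m n : ℕ} {t : ℝ → ℂ} (ht : t ∈ trigPolynomialLE m)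
    {P : ℂ[X]} (hP : P.natDegree ≤ n) : (fun θ => P.eval (t θ)) ∈ trigPolynomialLE (n * m) := by
  have hsum : (fun θ => P.eval (t θ)) = ∑ k ∈ range (n + 1), P.coeff k • t ^ k := by
    ext θ
    simp [eval_eq_sum_range' (Nat.lt_succ_of_le hP)]
  rw [hsum]
  refine sum_mem fun k hk => Submodule.smul_mem _ _ ?_
  exact trigPolynomialLE_mono (Nat.mul_le_mul_right m (mem_range_succ_iff.mp hk))
    (pow_mem_trigPolynomialLE ht k)

lemma exp_mem_trigPolynomialLE {n : ℕ} {j : ℤ} (hj : |j| ≤ n) :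
    (fun θ : ℝ => Complex.exp (j * (θ * Complex.I))) ∈ trigPolynomialLE n :=
  Submodule.subset_span ⟨j, hj, rfl⟩

lemma cos_mem_trigPolynomialLE : (fun θ : ℝ => Complex.cos θ) ∈ trigPolynomialLE 1 := by
  have hcos : (fun θ : ℝ => Complex.cos θ) =
      (1 / 2 : ℂ) • ((fun θ : ℝ => Complex.exp ((1 : ℤ) * (θ * Complex.I))) +
        fun θ : ℝ => Complex.exp ((-1 : ℤ) * (θ * Complex.I))) := by
    ext θ
    simp [Complex.cos, div_eq_inv_mul]
  rw [hcos]
  exact Submodule.smul_mem _ _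
    (add_mem (exp_mem_trigPolynomialLE (by simp)) (exp_mem_trigPolynomialLE (by simp)))

lemma sin_mem_trigPolynomialLE : (fun θ : ℝ => Complex.sin θ) ∈ trigPolynomialLE 1 := by
  have hsin : (fun θ : ℝ => Complex.sin θ) =
      (Complex.I / 2) • ((fun θ : ℝ => Complex.exp ((-1 : ℤ) * (θ * Complex.I))) -
        fun θ : ℝ => Complex.exp ((1 : ℤ) * (θ * Complex.I))) := by
    ext θ
    simp only [Complex.sin, Pi.smul_apply, Pi.sub_apply, smul_eq_mul, Int.cast_one, Int.cast_neg]
    ring_nf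
  rw [hsin]
  exact Submodule.smul_mem _ _
    (sub_mem (exp_mem_trigPolynomialLE (by simp)) (exp_mem_trigPolynomialLE (by simp)))

end TrigPolynomial

section Polynomials

variable {n : ℕ} {P : ℂ[X]} {M : ℝ}

theorem norm_eval_derivative_mul_sqrt_le (hdeg : P.natDegree ≤ n)
    (hP : ∀ x ∈ Set.Icc (-1 : ℝ) 1, ‖P.eval (x : ℂ)‖ ≤ M) {x : ℝ} (hx : x ∈ Set.Icc (-1 : ℝ) 1) :
    ‖P.derivative.eval (x : ℂ)‖ * √(1 - x ^ 2) ≤ n * M := by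
  have ht := eval_comp_mem_trigPolynomialLE cos_mem_trigPolynomialLE hdeg
  have hderiv : HasDerivAt (fun θ : ℝ => P.eval (Complex.cos θ))
      (P.derivative.eval (Complex.cos x.arccos) * -Complex.sin x.arccos) x.arccos :=
    ((P.hasDerivAt _).comp _ (Complex.hasDerivAt_cos _)).comp_ofReal
  have h := norm_deriv_le_of_mem_trigPolynomialLE ht (M := M)
    (fun θ => by simpa using hP _ (Real.cos_mem_Icc θ)) x.arccos
  rw [hderiv.deriv, norm_mul, norm_neg, ← Complex.ofReal_cos, ← Complex.ofReal_sin,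
    Real.cos_arccos hx.1 hx.2, Real.sin_arccos, Complex.norm_real,
    Real.norm_of_nonneg (Real.sqrt_nonneg _), mul_one] at h
  exact h

lemma norm_eval_one_le_of_mul_sqrt_le (hdeg : P.natDegree ≤ n)
    (hP : ∀ x ∈ Set.Icc (-1 : ℝ) 1, ‖P.eval (x : ℂ)‖ * √(1 - x ^ 2) ≤ M) :
    ‖P.eval 1‖ ≤ (n + 1) * M := by
  have ht := mul_mem_trigPolynomialLE
    (eval_comp_mem_trigPolynomialLE cos_mem_trigPolynomialLE hdeg) sin_mem_trigPolynomialLE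
  have hbound : ∀ θ : ℝ, ‖P.eval (Complex.cos θ) * Complex.sin θ‖ ≤ M := fun θ => by
    have h := hP _ (Real.cos_mem_Icc θ)
    rwa [← Real.abs_sin_eq_sqrt_one_sub_cos_sq, ← Real.norm_eq_abs, ← Complex.norm_real,
      ← norm_mul, Complex.ofReal_cos, Complex.ofReal_sin] at h
  have hderiv : HasDerivAt (fun θ : ℝ => P.eval (Complex.cos θ) * Complex.sin θ)
      (P.eval 1) 0 := by
    have h := (((P.hasDerivAt _).comp _ (Complex.hasDerivAt_cos _)).mul
      (Complex.hasDerivAt_sin ((0 : ℝ) : ℂ))).comp_ofReal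
    simpa using h
  have h := norm_deriv_le_of_mem_trigPolynomialLE ht hbound 0
  rw [mul_one, Nat.cast_add_one] at h
  exact hderiv.deriv ▸ h

-- The weight is monotone under `z ↦ x z`, so `P (x z)` satisfies the hypothesis whenever `P` does.
theorem norm_eval_le_of_mul_sqrt_le (hdeg : P.natDegree ≤ n)
    (hP : ∀ x ∈ Set.Icc (-1 : ℝ) 1, ‖P.eval (x : ℂ)‖ * √(1 - x ^ 2) ≤ M) {x : ℝ}
    (hx : x ∈ Set.Icc (-1 : ℝ) 1) : ‖P.eval (x : ℂ)‖ ≤ (n + 1) * M := by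
  have hscaled : ∀ z ∈ Set.Icc (-1 : ℝ) 1,
      ‖(P.comp (C (x : ℂ) * X)).eval (z : ℂ)‖ * √(1 - z ^ 2) ≤ M := fun z hz => by
    have hxz : |x * z| ≤ |z| := by
      rw [abs_mul]
      exact mul_le_of_le_one_left (abs_nonneg z) (abs_le.mpr hx)
    have hxz' : x * z ∈ Set.Icc (-1 : ℝ) 1 := abs_le.mp (hxz.trans (abs_le.mpr hz))
    calc ‖(P.comp (C (x : ℂ) * X)).eval (z : ℂ)‖ * √(1 - z ^ 2)
        = ‖P.eval ((x * z : ℝ) : ℂ)‖ * √(1 - z ^ 2) := by simp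
      _ ≤ ‖P.eval ((x * z : ℝ) : ℂ)‖ * √(1 - (x * z) ^ 2) := by
        gcongr _ * √(1 - ?_)
        exact sq_le_sq.mpr hxz
      _ ≤ M := hP _ hxz'
  have hdeg' : (P.comp (C (x : ℂ) * X)).natDegree ≤ n :=
    natDegree_comp_le.trans
      ((Nat.mul_le_mul hdeg (natDegree_C_mul_le _ _ |>.trans natDegree_X_le)).trans_eq (mul_one n))
  simpa using norm_eval_one_le_of_mul_sqrt_le hdeg' hscaled

theorem norm_eval_derivative_le (hdeg : P.natDegree ≤ n)
    (hP : ∀ x ∈ Set.Icc (-1 : ℝ) 1, ‖P.eval (x : ℂ)‖ ≤ M) {x : ℝ} (hx : x ∈ Set.Icc (-1 : ℝ) 1) :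
    ‖P.derivative.eval (x : ℂ)‖ ≤ n ^ 2 * M := by
  rcases n with _ | n
  · simp [derivative_of_natDegree_zero (Nat.le_zero.mp hdeg)]
  have hdeg' : P.derivative.natDegree ≤ n :=
    (natDegree_derivative_le P).trans (Nat.sub_le_of_le_add hdeg)
  refine (norm_eval_le_of_mul_sqrt_le hdeg'
    (fun y hy => norm_eval_derivative_mul_sqrt_le hdeg hP hy) hx).trans_eq ?_
  push_cast
  ring

theorem norm_eval_sub_eval_le (hdeg : P.natDegree ≤ n)
    (hP : ∀ x ∈ Set.Icc (-1 : ℝ) 1, ‖P.eval (x : ℂ)‖ ≤ M) {x y : ℝ}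
    (hx : x ∈ Set.Icc (-1 : ℝ) 1) (hy : y ∈ Set.Icc (-1 : ℝ) 1) :
    ‖P.eval (x : ℂ) - P.eval (y : ℂ)‖ ≤ n ^ 2 * M * |x - y| := by
  rw [← Real.norm_eq_abs]
  exact (convex_Icc (-1 : ℝ) 1).norm_image_sub_le_of_norm_hasDerivWithin_le
    (f := fun z : ℝ => P.eval (z : ℂ))
    (fun z _ => (P.hasDerivAt (z : ℂ)).comp_ofReal.hasDerivWithinAt)
    (fun _ hz => norm_eval_derivative_le hdeg hP hz) hy hx

theorem norm_eval_sub_eval_le_mul_half_pow {m : ℕ} (hdeg : P.natDegree ≤ n)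
    (hP : ∀ x ∈ Set.Icc (-1 : ℝ) 1, ‖P.eval (x : ℂ)‖ ≤ M) {x y : ℝ}
    (hx : x ∈ Set.Icc (-1 : ℝ) 1) (hy : y ∈ Set.Icc (-1 : ℝ) 1)
    (hxy : |x - y| ≤ (1 / 2 : ℝ) ^ (m + 2 * Nat.clog 2 n)) :
    ‖P.eval (x : ℂ) - P.eval (y : ℂ)‖ ≤ M * (1 / 2) ^ m := by
  have hM : 0 ≤ M := (norm_nonneg _).trans (hP x hx)
  have hclog : (n : ℝ) ≤ 2 ^ Nat.clog 2 n := by exact_mod_cast Nat.le_pow_clog one_lt_two n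
  calc ‖P.eval (x : ℂ) - P.eval (y : ℂ)‖
      ≤ n ^ 2 * M * |x - y| := norm_eval_sub_eval_le hdeg hP hx hy
    _ ≤ (2 ^ Nat.clog 2 n) ^ 2 * M * (1 / 2) ^ (m + 2 * Nat.clog 2 n) := by gcongr
    _ = M * (1 / 2) ^ m := by
      rw [pow_add, mul_comm 2, pow_mul, one_div_pow _ (Nat.clog 2 n)]
      field_simp

end Polynomials

lemma eval_map_ofRealHom (P : ℝ[X]) (x : ℝ) :
    (P.map Complex.ofRealHom).eval (x : ℂ) = P.eval x :=
  eval_map_apply (f := Complex.ofRealHom) x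

end MarkovInequality

theorem modulus_from_polynomial_approximation_general (f : ℝ → ℂ)
    (hf : ∀ x ∈ Set.Icc (-1 : ℝ) 1, ‖f x‖ ≤ 1) (P : ℕ → ℂ[X]) (D : ℕ → ℕ)
    (hdeg : ∀ m, (P m).natDegree ≤ D m)
    (happrox : ∀ m, ∀ x ∈ Set.Icc (-1 : ℝ) 1, ‖f x - (P m).eval (x : ℂ)‖ ≤ (1 / 2 : ℝ) ^ m)
    (n : ℕ) {x x' : ℝ} (hx : x ∈ Set.Icc (-1 : ℝ) 1) (hx' : x' ∈ Set.Icc (-1 : ℝ) 1)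
    (hxx' : |x - x'| ≤ (1 / 2 : ℝ) ^ (n + 2 + 2 * Nat.clog 2 (D (n + 2)))) :
    ‖f x - f x'‖ ≤ (1 / 2 : ℝ) ^ n := by
  set p := P (n + 2)
  have hp : ∀ y ∈ Set.Icc (-1 : ℝ) 1, ‖p.eval (y : ℂ)‖ ≤ 2 := fun y hy => by
    calc ‖p.eval (y : ℂ)‖
        ≤ ‖f y‖ + ‖f y - p.eval (y : ℂ)‖ := norm_le_norm_add_norm_sub _ _
      _ ≤ 1 + 1 := add_le_add (hf y hy)
          ((happrox (n + 2) y hy).trans (pow_le_one₀ (by norm_num) (by norm_num)))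
      _ = 2 := one_add_one_eq_two
  calc ‖f x - f x'‖
      ≤ ‖f x - p.eval (x : ℂ)‖ + ‖p.eval (x : ℂ) - p.eval (x' : ℂ)‖ +
          ‖p.eval (x' : ℂ) - f x'‖ := by
        simpa only [dist_eq_norm] using
          dist_triangle4 (f x) (p.eval (x : ℂ)) (p.eval (x' : ℂ)) (f x')
    _ ≤ (1 / 2) ^ (n + 2) + 2 * (1 / 2) ^ (n + 2) + (1 / 2) ^ (n + 2) := by
        refine add_le_add_three (happrox _ x hx) ?_ (norm_sub_rev (f x') _ ▸ happrox _ x' hx')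
        exact MarkovInequality.norm_eval_sub_eval_le_mul_half_pow (hdeg _) hp hx hx' hxx'
    _ = (1 / 2) ^ n := by ring

theorem modulus_from_polynomial_approximation (f : ℝ → ℝ)
    (hf : ∀ x ∈ Set.Icc (-1 : ℝ) 1, f x ∈ Set.Icc (-1 : ℝ) 1)
    (P : ℕ → Polynomial ℝ) (D : ℕ → ℕ) (hD : ∀ m, 1 ≤ D m)
    (hdeg : ∀ m, (P m).natDegree ≤ D m)
    (happrox : ∀ m, ∀ x ∈ Set.Icc (-1 : ℝ) 1, |f x - (P m).eval x| ≤ (1/2 : ℝ) ^ m) :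
    ∀ (n : ℕ), ∀ x ∈ Set.Icc (-1 : ℝ) 1, ∀ x' ∈ Set.Icc (-1 : ℝ) 1,
      |x - x'| ≤ (1/2 : ℝ) ^ (n + 2 + 2 * Nat.clog 2 (D (n + 2))) →
      |f x - f x'| ≤ (1/2 : ℝ) ^ n := by
  intro n x hx x' hx' hxx'
  have h := modulus_from_polynomial_approximation_general (fun y => (f y : ℂ))
    (fun y hy => by simpa using abs_le.mpr (hf y hy)) (fun m => (P m).map Complex.ofRealHom) D
    (fun m => natDegree_map_le.trans (hdeg m))
    (fun m y hy => by
      rw [MarkovInequality.eval_map_ofRealHom, ← Complex.ofReal_sub, Complex.norm_real]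
      exact happrox m y hy) n hx hx' hxx'
  rwa [← Complex.ofReal_sub, Complex.norm_real] at h
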